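/- Let F be a perfect field and let H be an abelian subgroup of GL_n(F). For each h ∈ H let h = h_s h_u be its multiplicative Jordan–Chevalley decomposition, i.e. h_s, h_u ∈ GL_n(F), h_s is semisimple (diagonalizable over the algebraic closure of F), h_u is unipotent (h_u − 1 is nilpotent), and h_s h_u = h_u h_s. Let ⟨H_s⟩ denote the subgroup of GL_n(F) generated by the set H_s = {h_s : h ∈ H}. Then M_H = M_{⟨H_s⟩} (both sides possibly infinite). Consequently, if H is an abelian subgroup of a subgroup G ≤ GL_n(F), then M_{⟨H_s⟩} ≤ M_G. -/

import Mathlib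

open MvPolynomial Matrix

/-- The action of `g ∈ GL_n(F)` on polynomials: `(g · f)(v) = f(g⁻¹ v)`. -/
noncomputable def glAct {n : ℕ} {F : Type} [Field F] (g : GL (Fin n) F)
    (f : MvPolynomial (Fin n) F) : MvPolynomial (Fin n) F :=
  aeval (fun i => ∑ j, ((g⁻¹ : GL (Fin n) F) : Matrix (Fin n) (Fin n) F) i j • X j) f

/-- The minimal positive degree of a nonzero homogeneous `G`-invariant polynomial,
as an element of `ℕ∞` (equal to `⊤` if there is no nonconstant invariant). -/
noncomputable def minDeg {n : ℕ} {F : Type} [Field F]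
    (G : Subgroup (GL (Fin n) F)) : ℕ∞ :=
  sInf {d : ℕ∞ | ∃ m : ℕ, d = (m : ℕ∞) ∧ 0 < m ∧
    ∃ f : MvPolynomial (Fin n) F, f ≠ 0 ∧ f.IsHomogeneous m ∧ ∀ g ∈ G, glAct g f = f}

/-- A matrix in `GL_n(F)` is semisimple if it is diagonalizable over the
algebraic closure of `F`. -/
def IsSemisimpleGL {n : ℕ} {F : Type} [Field F] (u : GL (Fin n) F) : Prop :=
  ∃ (P : GL (Fin n) (AlgebraicClosure F)) (dv : Fin n → AlgebraicClosure F),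
    ((u : Matrix (Fin n) (Fin n) F)).map (algebraMap F (AlgebraicClosure F)) =
      (P : Matrix (Fin n) (Fin n) (AlgebraicClosure F)) * diagonal dv *
        ((P⁻¹ : GL (Fin n) (AlgebraicClosure F)) : Matrix (Fin n) (Fin n) (AlgebraicClosure F))

/-- A matrix in `GL_n(F)` is unipotent if `u - 1` is nilpotent. -/
def IsUnipotentGL {n : ℕ} {F : Type} [Field F] (u : GL (Fin n) F) : Prop :=
  IsNilpotent ((u : Matrix (Fin n) (Fin n) F) - 1)

noncomputable def subM {n : ℕ} {K : Type} [Field K] (A : Matrix (Fin n) (Fin n) K) :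
    MvPolynomial (Fin n) K →ₐ[K] MvPolynomial (Fin n) K :=
  aeval (fun i => ∑ j, A i j • X j)

lemma subM_X {n : ℕ} {K : Type} [Field K] (A : Matrix (Fin n) (Fin n) K) (i : Fin n) :
    subM A (X i) = ∑ j, A i j • X j := by
  simp [subM]

lemma subM_subM {n : ℕ} {K : Type} [Field K] (A B : Matrix (Fin n) (Fin n) K)
    (f : MvPolynomial (Fin n) K) : subM A (subM B f) = subM (B * A) f := by
  rw [← AlgHom.comp_apply]
  congr 1
  apply MvPolynomial.algHom_ext
  intro i
  simp only [AlgHom.comp_apply, subM_X, map_sum, map_smul, Matrix.mul_apply, Finset.smul_sum,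
    Finset.sum_smul, smul_smul]
  rw [Finset.sum_comm]

lemma subM_one {n : ℕ} {K : Type} [Field K] (f : MvPolynomial (Fin n) K) :
    subM (1 : Matrix (Fin n) (Fin n) K) f = f := by
  have : subM (1 : Matrix (Fin n) (Fin n) K) = AlgHom.id K _ := by
    apply MvPolynomial.algHom_ext
    intro i
    simp [subM_X, Matrix.one_apply]
  rw [this]; rfl

lemma glAct_eq {n : ℕ} {F : Type} [Field F] (g : GL (Fin n) F) (f : MvPolynomial (Fin n) F) :
    glAct g f = subM ((g⁻¹ : GL (Fin n) F) : Matrix (Fin n) (Fin n) F) f := rfl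

lemma glAct_mul {n : ℕ} {F : Type} [Field F] (g h : GL (Fin n) F) (f : MvPolynomial (Fin n) F) :
    glAct (g * h) f = glAct g (glAct h f) := by
  rw [glAct_eq, glAct_eq, glAct_eq, subM_subM, _root_.mul_inv_rev, Units.val_mul]

lemma glAct_one {n : ℕ} {F : Type} [Field F] (f : MvPolynomial (Fin n) F) :
    glAct 1 f = f := by
  rw [glAct_eq, inv_one, Units.val_one, subM_one]

lemma glAct_inv_of_fix {n : ℕ} {F : Type} [Field F] (g : GL (Fin n) F)
    (f : MvPolynomial (Fin n) F) (h : glAct g f = f) : glAct g⁻¹ f = f := by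
  conv_lhs => rw [← h]
  rw [← glAct_mul, inv_mul_cancel, glAct_one]

lemma subM_fix_iff {n : ℕ} {F : Type} [Field F] (g : GL (Fin n) F)
    (f : MvPolynomial (Fin n) F) :
    subM (g : Matrix (Fin n) (Fin n) F) f = f ↔ glAct g f = f := by
  have e : subM (g : Matrix (Fin n) (Fin n) F) f = glAct g⁻¹ f := by rw [glAct_eq, inv_inv]
  rw [e]
  refine ⟨fun h => ?_, glAct_inv_of_fix g f⟩
  simpa using glAct_inv_of_fix _ _ h

lemma subM_map {n : ℕ} {F K : Type} [Field F] [Field K] [Algebra F K]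
    (A : Matrix (Fin n) (Fin n) F) (f : MvPolynomial (Fin n) F) :
    subM (A.map (algebraMap F K)) (MvPolynomial.map (algebraMap F K) f) =
      MvPolynomial.map (algebraMap F K) (subM A f) := by
  induction f using MvPolynomial.induction_on with
  | C a => simp [subM]
  | add p q hp hq => simp [hp, hq]
  | mul_X p i hp =>
    rw [map_mul, map_mul, map_mul, map_mul, hp, map_X, subM_X, subM_X, map_sum]
    congr 1
    apply Finset.sum_congr rfl
    intro j _
    rw [MvPolynomial.smul_eq_C_mul, MvPolynomial.smul_eq_C_mul, map_mul, map_C, map_X,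
      Matrix.map_apply]

lemma subM_homog {n : ℕ} {K : Type} [Field K] (A : Matrix (Fin n) (Fin n) K)
    (f : MvPolynomial (Fin n) K) (m : ℕ) (hf : f.IsHomogeneous m) :
    (subM A f).IsHomogeneous m := by
  have := hf.aeval (fun i => ∑ j, A i j • (X j : MvPolynomial (Fin n) K)) (n := 1) (by
    intro i
    apply MvPolynomial.IsHomogeneous.sum
    intro j _
    rw [MvPolynomial.smul_eq_C_mul]
    simpa using (MvPolynomial.isHomogeneous_C (Fin n) (A i j)).mul (isHomogeneous_X K j))
  simpa [subM] using this

/-- The operator `subM A - 1`. -/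
noncomputable def dl {n : ℕ} {K : Type} [Field K] (A : Matrix (Fin n) (Fin n) K) :
    Module.End K (MvPolynomial (Fin n) K) := (subM A).toLinearMap - 1

lemma dl_apply {n : ℕ} {K : Type} [Field K] (A : Matrix (Fin n) (Fin n) K)
    (f : MvPolynomial (Fin n) K) : dl A f = subM A f - f := rfl

lemma dl_mul {n : ℕ} {K : Type} [Field K] (A : Matrix (Fin n) (Fin n) K)
    (f g : MvPolynomial (Fin n) K) :
    dl A (f * g) = dl A f * dl A g + dl A f * g + f * dl A g := by
  simp only [dl_apply, map_mul]; ring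

lemma dl_pow_mul {n : ℕ} {K : Type} [Field K] (A : Matrix (Fin n) (Fin n) K) (s : ℕ) :
    ∀ (a b : ℕ) (f g : MvPolynomial (Fin n) K), a + b ≤ s → (dl A ^ a) f = 0 → (dl A ^ b) g = 0 →
      (dl A ^ s) (f * g) = 0 := by
  induction s with
  | zero =>
    intro a b f g hab hf hg
    obtain rfl : a = 0 := by omega
    have : f = 0 := by simpa using hf
    simp [this]
  | succ s ih =>
    intro a b f g hab hf hg
    rcases a with _ | a
    · have : f = 0 := by simpa using hf
      simp [this]
    rcases b with _ | b
    · have : g = 0 := by simpa using hg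
      simp [this]
    have hf' : (dl A ^ a) (dl A f) = 0 := by rw [pow_succ] at hf; exact hf
    have hg' : (dl A ^ b) (dl A g) = 0 := by rw [pow_succ] at hg; exact hg
    rw [pow_succ, Module.End.mul_apply, dl_mul, map_add, map_add,
      ih a b _ _ (by omega) hf' hg', ih a (b + 1) _ _ (by omega) hf' hg,
      ih (a + 1) b _ _ (by omega) hf hg']
    simp

lemma dl_pow_X {n : ℕ} {K : Type} [Field K] (A : Matrix (Fin n) (Fin n) K) (k : ℕ) (i : Fin n) :
    (dl A ^ k) (X i) = ∑ j, ((A - 1) ^ k) i j • X j := by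
  induction k with
  | zero => simp [Matrix.one_apply]
  | succ k ih =>
    have h1 : ∀ j, dl A (X j) = ∑ l, (A - 1) j l • X l := by
      intro j
      simp [dl_apply, subM_X, Matrix.sub_apply, sub_smul, Finset.sum_sub_distrib, Matrix.one_apply]
    rw [pow_succ', Module.End.mul_apply, ih]
    simp only [map_sum, map_smul, h1, pow_succ, Matrix.mul_apply, Finset.smul_sum,
      Finset.sum_smul, smul_smul]
    rw [Finset.sum_comm]

lemma dl_nilp {n : ℕ} {K : Type} [Field K] (A : Matrix (Fin n) (Fin n) K)
    (hA : IsNilpotent (A - 1)) (f : MvPolynomial (Fin n) K) : ∃ k, (dl A ^ k) f = 0 := by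
  induction f using MvPolynomial.induction_on with
  | C a => exact ⟨1, by simp [dl_apply, subM]⟩
  | add p q hp hq =>
    obtain ⟨a, ha⟩ := hp
    obtain ⟨b, hb⟩ := hq
    refine ⟨a + b, ?_⟩
    rw [map_add]
    nth_rewrite 1 [add_comm a b]
    rw [pow_add, pow_add, Module.End.mul_apply, Module.End.mul_apply, ha, hb]
    simp
  | mul_X p i hp =>
    obtain ⟨a, ha⟩ := hp
    obtain ⟨b, hb⟩ := hA
    exact ⟨a + b, dl_pow_mul A _ a b _ _ le_rfl ha (by rw [dl_pow_X, hb]; simp)⟩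

lemma pow_apply_eq {K V : Type} [Field K] [AddCommGroup V] [Module K V] (a b : Module.End K V)
    (h : Commute a b) (f : V) (hf : a f = b f) (k : ℕ) : (a ^ k) f = (b ^ k) f := by
  induction k with
  | zero => rfl
  | succ k ih =>
    rw [pow_succ', Module.End.mul_apply, ih, ← Module.End.mul_apply, (h.pow_right k).eq,
      Module.End.mul_apply, hf, pow_succ, Module.End.mul_apply]

lemma subM_diag_coeff {n : ℕ} {K : Type} [Field K] (d : Fin n → K)
    (f : MvPolynomial (Fin n) K) (m : Fin n →₀ ℕ) :
    coeff m (subM (diagonal d) f) = (∏ i, d i ^ m i) * coeff m f := by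
  induction f using MvPolynomial.induction_on' with
  | add p q hp hq => simp [hp, hq, mul_add]
  | monomial u a =>
    have : subM (diagonal d) (monomial u a) = monomial u ((∏ i, d i ^ u i) * a) := by
      rw [subM, aeval_monomial]
      have h1 : ∀ i, ∑ j, diagonal d i j • (X j : MvPolynomial (Fin n) K) = C (d i) * X i := by
        intro i
        simp [Matrix.diagonal_apply, MvPolynomial.smul_eq_C_mul]
      simp only [h1]
      rw [MvPolynomial.monomial_eq, Finsupp.prod_fintype _ _ (by simp),
        Finsupp.prod_fintype _ _ (by simp)]
      simp only [mul_pow, Finset.prod_mul_distrib, map_mul, map_prod, map_pow, algebraMap_eq]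
      ring
    rw [this, coeff_monomial, coeff_monomial]
    split_ifs with h
    · rw [h]
    · simp

lemma dl_diag_coeff {n : ℕ} {K : Type} [Field K] (d : Fin n → K) (k : ℕ)
    (f : MvPolynomial (Fin n) K) (m : Fin n →₀ ℕ) :
    coeff m ((dl (diagonal d) ^ k) f) = ((∏ i, d i ^ m i) - 1) ^ k * coeff m f := by
  induction k with
  | zero => simp
  | succ k ih =>
    rw [pow_succ', Module.End.mul_apply, dl_apply, coeff_sub, subM_diag_coeff, ih]
    ring

lemma dl_diag {n : ℕ} {K : Type} [Field K] (d : Fin n → K) (k : ℕ)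
    (f : MvPolynomial (Fin n) K) (hf : (dl (diagonal d) ^ k) f = 0) : dl (diagonal d) f = 0 := by
  ext m
  have h := dl_diag_coeff d k f m
  have h1 := dl_diag_coeff d 1 f m
  rw [pow_one, pow_one] at h1
  rw [h1, coeff_zero]
  rw [hf, coeff_zero] at h
  rcases mul_eq_zero.mp h.symm with h | h
  · rw [eq_zero_of_pow_eq_zero h, zero_mul]
  · rw [h, mul_zero]

lemma dl_conj {n : ℕ} {K : Type} [Field K] (P : GL (Fin n) K) (D : Matrix (Fin n) (Fin n) K)
    (k : ℕ) (f : MvPolynomial (Fin n) K) :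
    subM (P : Matrix (Fin n) (Fin n) K)
      ((dl ((P : Matrix (Fin n) (Fin n) K) * D * ((P⁻¹ : GL (Fin n) K) :
        Matrix (Fin n) (Fin n) K)) ^ k) f) = (dl D ^ k) (subM (P : Matrix (Fin n) (Fin n) K) f) := by
  induction k with
  | zero => simp
  | succ k ih =>
    rw [pow_succ', pow_succ', Module.End.mul_apply, Module.End.mul_apply, ← ih, dl_apply, dl_apply,
      map_sub, subM_subM, subM_subM]
    simp [Matrix.mul_assoc]

lemma dl_map {n : ℕ} {F K : Type} [Field F] [Field K] [Algebra F K]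
    (A : Matrix (Fin n) (Fin n) F) (k : ℕ) (f : MvPolynomial (Fin n) F) :
    (dl (A.map (algebraMap F K)) ^ k) (MvPolynomial.map (algebraMap F K) f) =
      MvPolynomial.map (algebraMap F K) ((dl A ^ k) f) := by
  induction k with
  | zero => simp
  | succ k ih =>
    rw [pow_succ', pow_succ', Module.End.mul_apply, Module.End.mul_apply, ih, dl_apply, dl_apply,
      map_sub, subM_map]

lemma subM_inj {n : ℕ} {K : Type} [Field K] (P : GL (Fin n) K) (f : MvPolynomial (Fin n) K)
    (h : subM (P : Matrix (Fin n) (Fin n) K) f = 0) : f = 0 := by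
  have := congrArg (subM ((P⁻¹ : GL (Fin n) K) : Matrix (Fin n) (Fin n) K)) h
  rw [subM_subM, ← Units.val_mul, mul_inv_cancel, Units.val_one, subM_one, map_zero] at this
  exact this

lemma dl_semisimple {n : ℕ} {F : Type} [Field F] (u : GL (Fin n) F) (hu : IsSemisimpleGL u)
    (k : ℕ) (f : MvPolynomial (Fin n) F)
    (hf : (dl (u : Matrix (Fin n) (Fin n) F) ^ k) f = 0) :
    dl (u : Matrix (Fin n) (Fin n) F) f = 0 := by
  obtain ⟨P, d, h⟩ := hu
  apply MvPolynomial.map_injective _ (algebraMap F (AlgebraicClosure F)).injective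
  have e := dl_map (K := AlgebraicClosure F) (u : Matrix (Fin n) (Fin n) F) k f
  have e1 := dl_map (K := AlgebraicClosure F) (u : Matrix (Fin n) (Fin n) F) 1 f
  rw [pow_one, pow_one] at e1
  rw [← e1, map_zero]
  rw [hf, map_zero, h] at e
  rw [h]
  apply subM_inj P
  have c := dl_conj P (diagonal d) k (MvPolynomial.map (algebraMap F (AlgebraicClosure F)) f)
  have c1 := dl_conj P (diagonal d) 1 (MvPolynomial.map (algebraMap F (AlgebraicClosure F)) f)
  rw [pow_one, pow_one] at c1
  rw [c1]
  apply dl_diag d k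
  rw [← c, e, map_zero]

lemma isSemisimple_toLin {n : ℕ} {F : Type} [Field F] (u : GL (Fin n) F)
    (hu : IsSemisimpleGL u) :
    Module.End.IsSemisimple (Matrix.toLinAlgEquiv' (u : Matrix (Fin n) (Fin n) F)) := by
  obtain ⟨P, d, h⟩ := hu
  set A : Matrix (Fin n) (Fin n) F := u.val with hA
  obtain ⟨g, k, sq, -, dv⟩ := exists_squarefree_dvd_pow_of_ne_zero
    (minpoly.ne_zero_of_finite F A)
  have h0 : (Polynomial.aeval A g) ^ k = 0 := by
    rw [← map_pow]
    exact minpoly.dvd_iff.mp dv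
  suffices hg : Polynomial.aeval A g = 0 by
    refine Module.End.isSemisimple_of_squarefree_aeval_eq_zero sq ?_
    rw [Polynomial.aeval_algHom_apply, hg, map_zero]
  let K := AlgebraicClosure F
  let φ : Matrix (Fin n) (Fin n) F →ₐ[F] Matrix (Fin n) (Fin n) K :=
    (Algebra.ofId F K).mapMatrix
  have hφ : ∀ M, φ M = M.map (algebraMap F K) := fun M => rfl
  have inj : Function.Injective φ := fun M N hMN =>
    Matrix.map_injective (algebraMap F K).injective hMN
  let ψ : Matrix (Fin n) (Fin n) K →ₐ[F] Matrix (Fin n) (Fin n) K :=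
    AlgHom.ofLinearMap
      (LinearMap.mulLeft F (P : Matrix (Fin n) (Fin n) K) ∘ₗ
        LinearMap.mulRight F ((P⁻¹ : GL (Fin n) K) : Matrix (Fin n) (Fin n) K))
      (by simp only [LinearMap.comp_apply, LinearMap.mulLeft_apply, LinearMap.mulRight_apply, one_mul, ← Units.val_mul, mul_inv_cancel, Units.val_one])
      (by
        intro x y
        have hP : ((P⁻¹ : GL (Fin n) K) : Matrix (Fin n) (Fin n) K) * (P : Matrix (Fin n) (Fin n) K) = 1 := P.inv_mul
        simp only [LinearMap.comp_apply, LinearMap.mulLeft_apply, LinearMap.mulRight_apply]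
        simp only [Matrix.mul_assoc]
        rw [← Matrix.mul_assoc _ (P : Matrix (Fin n) (Fin n) K), hP, Matrix.one_mul])
  have hψ : ∀ M, ψ M = (P : Matrix (Fin n) (Fin n) K) * (M * ((P⁻¹ : GL (Fin n) K) : Matrix (Fin n) (Fin n) K)) := fun M => rfl
  have ψinj : Function.Injective ψ := by
    intro M N hMN
    rw [hψ, hψ] at hMN
    exact P⁻¹.isUnit.mul_left_injective (P.isUnit.mul_right_injective hMN)
  have hAd : φ A = ψ (diagonalAlgHom F d) := by
    rw [hφ, h, hψ, Matrix.mul_assoc]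
    rfl
  have key : φ (Polynomial.aeval A g) = ψ (diagonalAlgHom F (Polynomial.aeval d g)) := by
    rw [← Polynomial.aeval_algHom_apply, hAd, Polynomial.aeval_algHom_apply,
      Polynomial.aeval_algHom_apply]
  have hd : (Polynomial.aeval d g) ^ k = 0 := by
    have : ψ (diagonalAlgHom F ((Polynomial.aeval d g) ^ k)) = 0 := by
      rw [map_pow, map_pow, ← key, ← map_pow, h0, map_zero]
    have := ψinj (this.trans (map_zero ψ).symm)
    exact Matrix.diagonal_injective (this.trans (Matrix.diagonal_zero).symm)
  have hd0 : Polynomial.aeval d g = 0 := eq_zero_of_pow_eq_zero hd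
  apply inj
  rw [key, hd0, map_zero, map_zero, map_zero]

lemma commute_semisimple_part {n : ℕ} {F : Type} [Field F] [PerfectField F]
    (a k s u : GL (Fin n) F) (hk : k = s * u) (hs : IsSemisimpleGL s) (hu : IsUnipotentGL u)
    (hsu : s * u = u * s) (ha : a * k = k * a) : a * s = s * a := by
  let T : GL (Fin n) F → Module.End F (Fin n → F) :=
    fun g => Matrix.toLinAlgEquiv' (g : Matrix (Fin n) (Fin n) F)
  have Tmul : ∀ g h, T (g * h) = T g * T h := fun g h => by
    simp only [T, Units.val_mul, map_mul]
  obtain ⟨n₀, hn₀, s₀, hs₀, hnil, hss, h₀⟩ := (T k).exists_isNilpotent_isSemisimple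
  have hsu' : Commute (T s) (T u) := by
    show T s * T u = T u * T s
    rw [← Tmul, ← Tmul, hsu]
  have hu1 : IsNilpotent (T u - 1) := by
    have := IsNilpotent.map hu (Matrix.toLinAlgEquiv' (R := F) (n := Fin n))
    simpa [T] using this
  have hc1 : Commute (T s) (T u - 1) := hsu'.sub_right (Commute.one_right _)
  have hcs0 : Commute n₀ s₀ := by
    have c : Commute n₀ (T k) := (Algebra.commute_of_mem_adjoin_self hn₀).symm
    exact Algebra.commute_of_mem_adjoin_singleton_of_commute hs₀ c
  have huniq := Module.End.isNilpotent_isSemisimple_unique (n₁ := T s * (T u - 1)) (s₁ := T s)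
    (n₂ := n₀) (s₂ := s₀) (hc1.isNilpotent_mul_left hu1) (isSemisimple_toLin s hs) hnil hss
    ((Commute.refl (T s)).mul_left hc1.symm) hcs0 (by
      rw [← h₀, hk, Tmul, mul_sub, mul_one, sub_add_cancel])
  have hak : Commute (T a) (T k) := by
    show T a * T k = T k * T a
    rw [← Tmul, ← Tmul, ha]
  have := Algebra.commute_of_mem_adjoin_singleton_of_commute hs₀ hak
  rw [← huniq.2] at this
  have h2 : T (a * s) = T (s * a) := by rw [Tmul, Tmul]; exact this
  exact Units.ext ((Matrix.toLinAlgEquiv' (R := F) (n := Fin n)).injective h2)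

lemma exists_common_fixed {F V : Type} [Field F] [AddCommGroup V] [Module F V]
    (S : Set (Module.End F V)) (hS : ∀ a ∈ S, ∀ b ∈ S, Commute a b) (N : ℕ) :
    ∀ (W : Submodule F V), Module.Finite F W → Module.finrank F W ≤ N → W ≠ ⊥ →
    (∀ a ∈ S, ∀ w ∈ W, a w ∈ W) → (∀ a ∈ S, ∀ w ∈ W, ∃ k : ℕ, ((a - 1) ^ k : Module.End F V) w = 0) →
    ∃ w ∈ W, w ≠ 0 ∧ ∀ a ∈ S, a w = w := by
  induction N with
  | zero =>
    intro W hfin hN hW _ _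
    exact absurd (Submodule.finrank_eq_zero.mp (Nat.le_zero.mp hN)) hW
  | succ N ih =>
    intro W hfin hN hW hst hnil
    by_cases hall : ∀ a ∈ S, ∀ w ∈ W, a w = w
    · obtain ⟨w, hw, hw0⟩ := Submodule.exists_mem_ne_zero_of_ne_bot hW
      exact ⟨w, hw, hw0, fun a ha => hall a ha w hw⟩
    push Not at hall
    obtain ⟨a, ha, v, hv, hav⟩ := hall
    let W' : Submodule F V := W ⊓ LinearMap.ker (a - 1)
    have hmem : ∀ w, w ∈ W' ↔ w ∈ W ∧ a w = w := by
      intro w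
      simp [W', sub_eq_zero]
    have hle : W' ≤ W := inf_le_left
    have hlt : W' < W := lt_of_le_of_ne hle (fun e => hav ((hmem v).1 (e ▸ hv)).2)
    have hfr := Submodule.finrank_lt_finrank_of_lt hlt
    obtain ⟨w, hw, hw0, hwa⟩ := ih W' (Submodule.finiteDimensional_of_le hle) (by omega) (by
        have hpow : ∀ k : ℕ, ((a - 1) ^ k : Module.End F V) v ∈ W := by
          intro k
          induction k with
          | zero => simpa using hv
          | succ k ihk =>
            rw [pow_succ', Module.End.mul_apply]
            exact W.sub_mem (hst a ha _ ihk) ihk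
        have hex := hnil a ha v hv
        classical
        have h1 := Nat.find_spec hex
        have hpos : Nat.find hex ≠ 0 := by
          intro h
          rw [h] at h1
          have hv0 : v = 0 := by simpa using h1
          exact hav (by rw [hv0, map_zero])
        obtain ⟨j, hj⟩ := Nat.exists_eq_succ_of_ne_zero hpos
        have h2 := Nat.find_min hex (m := j) (by omega)
        intro hbot
        apply h2
        have : ((a - 1) ^ j : Module.End F V) v ∈ W' := by
          rw [hmem]
          refine ⟨hpow j, ?_⟩
          rw [hj, Nat.succ_eq_add_one, pow_succ', Module.End.mul_apply] at h1
          exact sub_eq_zero.mp h1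
        rw [hbot] at this
        simpa using this)
      (by
        intro b hb w hw
        rw [hmem] at hw ⊢
        refine ⟨hst b hb w hw.1, ?_⟩
        rw [← Module.End.mul_apply, (hS a ha b hb).eq, Module.End.mul_apply, hw.2])
      (fun b hb w hw => hnil b hb w (hle hw))
    exact ⟨w, hle hw, hw0, hwa⟩

lemma subM_commute {n : ℕ} {F : Type} [Field F] (g h : GL (Fin n) F) (e : g * h = h * g) :
    Commute (subM (g : Matrix (Fin n) (Fin n) F)).toLinearMap
      (subM (h : Matrix (Fin n) (Fin n) F)).toLinearMap := by
  apply LinearMap.ext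
  intro f
  show subM _ (subM _ f) = subM _ (subM _ f)
  rw [subM_subM, subM_subM, ← Units.val_mul, ← Units.val_mul, e]

lemma fix_semisimple_part {n : ℕ} {F : Type} [Field F] (s u : GL (Fin n) F)
    (hs : IsSemisimpleGL s) (hu : IsUnipotentGL u) (hsu : s * u = u * s)
    (f : MvPolynomial (Fin n) F) (hf : glAct (s * u) f = f) : glAct s f = f := by
  rw [← subM_fix_iff] at hf ⊢
  have hc := subM_commute s u hsu
  set S := (subM (s : Matrix (Fin n) (Fin n) F)).toLinearMap with hS
  set U := (subM (u : Matrix (Fin n) (Fin n) F)).toLinearMap with hU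
  have hSU : S (U f) = f := by
    show subM _ (subM _ f) = f
    rw [subM_subM, ← Units.val_mul, ← hsu, hf]
  obtain ⟨k, hk⟩ := dl_nilp (u : Matrix (Fin n) (Fin n) F) hu f
  have hk' : ((U - 1) ^ k) f = 0 := hk
  have c1 : Commute S (U - 1) := hc.sub_right (Commute.one_right _)
  have c2 : Commute (S - 1) (-S * (U - 1)) :=
    (((Commute.refl S).neg_right.mul_right c1)).sub_left (Commute.one_left _)
  have e := pow_apply_eq (S - 1) (-S * (U - 1)) c2 f (by
    simp only [LinearMap.sub_apply, Module.End.mul_apply, LinearMap.neg_apply, Module.End.one_apply,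
      map_sub, hSU]
    abel) k
  rw [(c1.neg_left).mul_pow, Module.End.mul_apply, hk', map_zero] at e
  exact sub_eq_zero.mp (dl_semisimple s hs k f e)

lemma glAct_closure {n : ℕ} {F : Type} [Field F] (S : Set (GL (Fin n) F))
    (f : MvPolynomial (Fin n) F) (h : ∀ g ∈ S, glAct g f = f) :
    ∀ g ∈ Subgroup.closure S, glAct g f = f := by
  intro g hg
  induction hg using Subgroup.closure_induction with
  | mem x hx => exact h x hx
  | one => exact glAct_one f
  | mul x y _ _ hx hy => rw [glAct_mul, hy, hx]
  | inv x _ hx => exact glAct_inv_of_fix x f hx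

/-- For a perfect field `F` and an abelian subgroup `H ≤ GL_n(F)`, the minimal degree of
invariants of `H` equals that of the subgroup generated by the semisimple parts of
elements of `H`; consequently `M_{⟨H_s⟩} ≤ M_G` for any subgroup `G` containing `H`. -/
theorem stmt3 {n : ℕ} {F : Type} [Field F] [PerfectField F]
    (H : Subgroup (GL (Fin n) F))
    (hab : ∀ a ∈ H, ∀ b ∈ H, a * b = b * a)
    (hs hu : GL (Fin n) F → GL (Fin n) F)
    (hdecomp : ∀ h ∈ H, h = hs h * hu h)
    (hss : ∀ h ∈ H, IsSemisimpleGL (hs h))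
    (huni : ∀ h ∈ H, IsUnipotentGL (hu h))
    (hcomm : ∀ h ∈ H, hs h * hu h = hu h * hs h) :
    minDeg H = minDeg (Subgroup.closure (hs '' (H : Set (GL (Fin n) F)))) ∧
    ∀ G : Subgroup (GL (Fin n) F), H ≤ G →
      minDeg (Subgroup.closure (hs '' (H : Set (GL (Fin n) F)))) ≤ minDeg G := by
  have main : minDeg H = minDeg (Subgroup.closure (hs '' (H : Set (GL (Fin n) F)))) := by
    apply le_antisymm
    · apply le_sInf
      rintro _ ⟨m, rfl, hm, f, hf0, hfm, hf⟩
      apply sInf_le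
      refine ⟨m, rfl, hm, ?_⟩
      let T : GL (Fin n) F → Module.End F (MvPolynomial (Fin n) F) :=
        fun g => (subM (g : Matrix (Fin n) (Fin n) F)).toLinearMap
      have hT : ∀ g p, T g p = subM (g : Matrix (Fin n) (Fin n) F) p := fun g p => rfl
      let W : Submodule F (MvPolynomial (Fin n) F) :=
        homogeneousSubmodule (Fin n) F m ⊓ ⨅ h ∈ H, LinearMap.ker (T (hs h) - 1)
      have hW : ∀ p, p ∈ W ↔ p.IsHomogeneous m ∧ ∀ h ∈ H, T (hs h) p = p := by
        intro p
        simp [W, Submodule.mem_iInf, sub_eq_zero]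
      have hfin0 : Module.Finite F (homogeneousSubmodule (Fin n) F m) :=
        Module.Finite.iff_fg.mpr (homogeneousSubmodule_fg (Fin n) F m)
      have hfin : Module.Finite F W := Submodule.finiteDimensional_of_le inf_le_left
      have hcs : ∀ a ∈ H, ∀ k ∈ H, a * hs k = hs k * a := fun a ha k hk =>
        commute_semisimple_part a k (hs k) (hu k) (hdecomp k hk) (hss k hk) (huni k hk)
          (hcomm k hk) (hab a ha k hk)
      obtain ⟨w, hw, hw0, hfix⟩ := exists_common_fixed (T '' (H : Set (GL (Fin n) F)))
        (by
          rintro _ ⟨a, ha, rfl⟩ _ ⟨b, hb, rfl⟩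
          exact subM_commute a b (hab a ha b hb))
        (Module.finrank F W) W hfin le_rfl
        (by
          intro hbot
          have : f ∈ W := by
            rw [hW]
            refine ⟨hfm, fun h hh => ?_⟩
            rw [hT, subM_fix_iff]
            exact hf _ (Subgroup.subset_closure ⟨h, hh, rfl⟩)
          rw [hbot] at this
          exact hf0 (by simpa using this))
        (by
          rintro _ ⟨a, ha, rfl⟩ w hw
          rw [hW] at hw ⊢
          refine ⟨subM_homog _ _ _ hw.1, fun h hh => ?_⟩
          have := (subM_commute (hs h) a (hcs a ha h hh).symm).eq
          rw [← Module.End.mul_apply]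
          refine (LinearMap.congr_fun this w).trans ?_
          exact congrArg (T a) (hw.2 h hh))
        (by
          rintro _ ⟨a, ha, rfl⟩ w hw
          rw [hW] at hw
          obtain ⟨k, hk⟩ := dl_nilp _ (huni a ha) w
          refine ⟨k, ?_⟩
          have hau : a * hu a = hu a * a := by
            have h1 := hdecomp a ha
            have h2 := hcomm a ha
            generalize hs a = s at *
            generalize hu a = u at *
            subst h1
            rw [h2, mul_assoc, h2]
          have c : Commute (T a) (T (hu a)) := subM_commute _ _ hau
          have c' : Commute (T a - 1) (T (hu a) - 1) :=
            (c.sub_right (Commute.one_right _)).sub_left (Commute.one_left _)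
          rw [pow_apply_eq _ _ c' w _ k]
          · exact hk
          · have : T a w = T (hu a) w := by
              conv_lhs => rw [hdecomp a ha]
              rw [hT, Units.val_mul, ← subM_subM]
              exact congrArg (T (hu a)) (hw.2 a ha)
            simp only [LinearMap.sub_apply, this])
      refine ⟨w, hw0, ((hW w).1 hw).1, fun g hg => ?_⟩
      rw [← subM_fix_iff]
      exact hfix _ ⟨g, hg, rfl⟩
    · apply le_sInf
      rintro _ ⟨m, rfl, hm, f, hf0, hfm, hf⟩
      apply sInf_le
      refine ⟨m, rfl, hm, f, hf0, hfm, ?_⟩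
      apply glAct_closure
      rintro _ ⟨h, hh, rfl⟩
      refine fix_semisimple_part (hs h) (hu h) (hss h hh) (huni h hh) (hcomm h hh) f ?_
      rw [← hdecomp h hh]
      exact hf h hh
  refine ⟨main, fun G hG => ?_⟩
  rw [← main]
  apply sInf_le_sInf
  rintro _ ⟨m, rfl, hm, f, hf0, hfm, hf⟩
  exact ⟨m, rfl, hm, f, hf0, hfm, fun g hg => hf g (hG hg)⟩
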